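/- arXiv:1704.07717 — 2 statements merged into one kernel-verified Lean document; each statement's English description precedes it below -/
import Mathlib

section
/- Let (X,d_X,μ_X) and (Y,d_Y,μ_Y) be metric measure spaces which satisfy the general inequality B̄M(1) and BM(p), respectively, for some p∈ℝ∪{±∞}, with μ_X and μ_Y σ-finite. Let λ∈(0,1) and let A,B⊆X×Y be non-empty measurable sets such that (1−λ)A⋆λB is also measurable and sup_{x∈X} μ_Y(A(x)) = sup_{x∈X} μ_Y(B(x)). Then μ_{X×Y}((1−λ)A⋆λB) ≥ (1−λ)μ_{X×Y}(A) + λμ_{X×Y}(B). -/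
open MeasureTheory Set Metric Filter
open scoped ENNReal NNReal Topology Pointwise

noncomputable section

/-- The `d`-convex combination `(1-λ)A ⋆_d λB` of two sets. -/
def starComb {Z : Type*} (d : Z → Z → ℝ) (lam : ℝ) (A B : Set Z) : Set Z :=
  {z | ∃ a ∈ A, ∃ b ∈ B, d z a = lam * d a b ∧ d z b = (1 - lam) * d a b}

/-- A distance is strictly intrinsic: closed balls of radii summing to the distance
between their centers intersect. -/
def StrictlyIntrinsicDist {Z : Type*} (d : Z → Z → ℝ) : Prop :=
  ∀ x y : Z, ∀ r₁ r₂ : ℝ, 0 ≤ r₁ → 0 ≤ r₂ → r₁ + r₂ = d x y →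
    ∃ z : Z, d z x ≤ r₁ ∧ d z y ≤ r₂

/-- The ℓ² (Euclidean) product metric on `X × Y`. -/
def rho {X Y : Type*} [PseudoMetricSpace X] [PseudoMetricSpace Y] (a b : X × Y) : ℝ :=
  Real.sqrt (dist a.1 b.1 ^ 2 + dist a.2 b.2 ^ 2)

/-- The ℓ² (Euclidean) metric on a finite product of copies of a metric space. -/
def rhoPi {ι : Type*} [Fintype ι] {X : Type*} [PseudoMetricSpace X] (a b : ι → X) : ℝ :=
  Real.sqrt (∑ i, dist (a i) (b i) ^ 2)

open Classical in
/-- The `p`-th mean `M_p(a,b,λ)` of `a, b ∈ [0,∞]`, for `p ∈ ℝ ∪ {±∞}`, with the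
convention that it vanishes whenever `a * b = 0`. -/
def Mp (p : EReal) (lam : ℝ) (a b : ℝ≥0∞) : ℝ≥0∞ :=
  if a = 0 ∨ b = 0 then 0
  else if p = ⊤ then max a b
  else if p = ⊥ then min a b
  else if p = 0 then a ^ (1 - lam) * b ^ lam
  else (ENNReal.ofReal (1 - lam) * a ^ p.toReal + ENNReal.ofReal lam * b ^ p.toReal) ^ (1 / p.toReal)

open Classical in
/-- The `p`-th mean `M_p(a,b,λ)` of nonnegative reals, with the zero convention. -/
def MpR (p : EReal) (lam a b : ℝ) : ℝ :=
  if a = 0 ∨ b = 0 then 0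
  else if p = ⊤ then max a b
  else if p = ⊥ then min a b
  else if p = 0 then a ^ (1 - lam) * b ^ lam
  else ((1 - lam) * a ^ p.toReal + lam * b ^ p.toReal) ^ (1 / p.toReal)

/-- `(X,d,μ)` satisfies `BM(p)`. -/
def SatisfiesBM {X : Type*} [MeasurableSpace X] (d : X → X → ℝ) (μ : Measure X)
    (p : EReal) : Prop :=
  ∀ lam : ℝ, lam ∈ Ioo (0:ℝ) 1 → ∀ A B C : Set X, A.Nonempty → B.Nonempty →
    MeasurableSet A → MeasurableSet B → MeasurableSet C →
    μ A ≠ 0 → μ B ≠ 0 → starComb d lam A B ⊆ C →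
    Mp p lam (μ A) (μ B) ≤ μ C

/-- `(X,d,μ)` satisfies the general (linear) inequality `B̄M(1)`:
`μ(C) ≥ (1-λ)μ(A) + λμ(B)` for all nonempty measurable `A, B, C` with
`C ⊇ (1-λ)A ⋆ λB`. -/
def SatisfiesBMbarLinear {X : Type*} [MeasurableSpace X] (d : X → X → ℝ)
    (μ : Measure X) : Prop :=
  ∀ lam : ℝ, lam ∈ Ioo (0:ℝ) 1 → ∀ A B C : Set X, A.Nonempty → B.Nonempty →
    MeasurableSet A → MeasurableSet B → MeasurableSet C →
    starComb d lam A B ⊆ C →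
    ENNReal.ofReal (1 - lam) * μ A + ENNReal.ofReal lam * μ B ≤ μ C

/-- `(X,d,μ)` satisfies the general inequality `B̄M(p)` for a real `p > 0`:
`μ(C) ≥ ((1-λ)μ(A)^p + λμ(B)^p)^{1/p}` for all nonempty measurable `A, B, C`
with `C ⊇ (1-λ)A ⋆ λB`. -/
def SatisfiesBMbarPos {X : Type*} [MeasurableSpace X] (d : X → X → ℝ) (μ : Measure X)
    (p : ℝ) : Prop :=
  ∀ lam : ℝ, lam ∈ Ioo (0:ℝ) 1 → ∀ A B C : Set X, A.Nonempty → B.Nonempty →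
    MeasurableSet A → MeasurableSet B → MeasurableSet C →
    starComb d lam A B ⊆ C →
    (ENNReal.ofReal (1 - lam) * μ A ^ p + ENNReal.ofReal lam * μ B ^ p) ^ (1/p) ≤ μ C

/-- `(X,d,μ)` satisfies the weighted inequality `BM(p,q)`:
`μ(C)^p ≥ (1-λ)^q μ(A)^p + λ^q μ(B)^p` for all nonempty measurable sets of positive
measure with `C ⊇ (1-λ)A ⋆ λB`. -/
def SatisfiesBMW {X : Type*} [MeasurableSpace X] (d : X → X → ℝ) (μ : Measure X)
    (p q : ℝ) : Prop :=
  ∀ lam : ℝ, lam ∈ Ioo (0:ℝ) 1 → ∀ A B C : Set X, A.Nonempty → B.Nonempty →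
    MeasurableSet A → MeasurableSet B → MeasurableSet C →
    μ A ≠ 0 → μ B ≠ 0 → starComb d lam A B ⊆ C →
    ENNReal.ofReal ((1 - lam) ^ q) * μ A ^ p + ENNReal.ofReal (lam ^ q) * μ B ^ p ≤ μ C ^ p

/-- `(X,d,μ)` satisfies the Prékopa–Leindler inequality `PL`. -/
def SatisfiesPL {X : Type*} [MeasurableSpace X] (d : X → X → ℝ) (μ : Measure X) : Prop :=
  ∀ lam : ℝ, lam ∈ Ioo (0:ℝ) 1 → ∀ f g h : X → ℝ≥0∞,
    Measurable f → Measurable g → Measurable h →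
    (∀ x y z : X, d z x = lam * d x y → d z y = (1 - lam) * d x y →
      f x ^ (1 - lam) * g y ^ lam ≤ h z) →
    (∫⁻ x, f x ∂μ) ^ (1 - lam) * (∫⁻ x, g x ∂μ) ^ lam ≤ ∫⁻ x, h x ∂μ

open Classical in
/-- `(X,d,μ)` satisfies the Borell–Brascamp–Lieb inequality `BBL(p,m)`. -/
def SatisfiesBBL {X : Type*} [MeasurableSpace X] (d : X → X → ℝ) (μ : Measure X)
    (p m : ℝ) : Prop :=
  ∀ lam : ℝ, lam ∈ Ioo (0:ℝ) 1 → ∀ f g h : X → ℝ≥0∞,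
    Measurable f → Measurable g → Measurable h →
    (∀ x y z : X, d z x = lam * d x y → d z y = (1 - lam) * d x y →
      Mp (p : EReal) lam (f x) (g y) ≤ h z) →
    Mp (if m * p + 1 = 0 then (⊥ : EReal) else ((p / (m * p + 1) : ℝ) : EReal)) lam
      (∫⁻ x, f x ∂μ) (∫⁻ x, g x ∂μ) ≤ ∫⁻ x, h x ∂μ

/-- `φ : ℝ → ℝ` is positively decreasing: `t ↦ φ(t)` and `t ↦ φ(-t)` are
non-increasing on `[0,∞)`. -/
def PositivelyDecreasing (φ : ℝ → ℝ) : Prop :=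
  (∀ s t : ℝ, 0 ≤ s → s ≤ t → φ t ≤ φ s) ∧ (∀ s t : ℝ, 0 ≤ s → s ≤ t → φ (-t) ≤ φ (-s))

/-- A set `A ⊆ ℝⁿ` is weakly unconditional. -/
def WeaklyUnconditional {n : ℕ} (A : Set (Fin n → ℝ)) : Prop :=
  ∀ x ∈ A, ∀ ε : Fin n → ℝ, (∀ i, ε i = 0 ∨ ε i = 1) → (fun i => ε i * x i) ∈ A

/-- A nonnegative function on a real vector space is `p`-concave. -/
def PConcaveFn {E : Type*} [AddCommGroup E] [Module ℝ E] (p : EReal) (φ : E → ℝ) : Prop :=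
  ∀ x y : E, ∀ lam : ℝ, lam ∈ Ioo (0:ℝ) 1 →
    MpR p lam (φ x) (φ y) ≤ φ ((1 - lam) • x + lam • y)

/-- A function on a real vector space is radially decreasing. -/
def RadiallyDecreasing {E : Type*} [AddCommGroup E] [Module ℝ E] (φ : E → ℝ) : Prop :=
  ∀ x : E, ∀ t : ℝ, t ∈ Icc (0:ℝ) 1 → φ x ≤ φ (t • x)


/-!
The weakest of the inequalities `BM(p)` is `BM(-∞)`, so the measure of a section of the combination
of `A` and `B` over a point between `x` and `y` is at least the minimum of the measures of the
sections `A(x)` and `B(y)`. A superlevel set `{x | t < μ_Y(C(x))}` therefore contains the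
combination of the corresponding superlevel sets for `A` and `B`. Since the suprema of the sections
agree, these two are non-empty for the same values of `t`, so that `B̄M(1)` applies for each such
`t`; integrating over `t` gives the inequality.
-/

theorem antitone_ennreal_rpow_of_nonpos {q : ℝ} (hq : q ≤ 0) :
    Antitone fun x : ℝ≥0∞ => x ^ q := by
  intro a b hab
  have inv_le : (b ^ (-q))⁻¹ ≤ (a ^ (-q))⁻¹ :=
    ENNReal.inv_le_inv.2 (ENNReal.rpow_le_rpow hab (neg_nonneg.2 hq))
  simpa only [← ENNReal.rpow_neg, neg_neg] using inv_le

theorem min_le_rpow_mul_rpow {s t : ℝ} (hs : 0 ≤ s) (ht : 0 ≤ t) (hst : s + t = 1)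
    (a b : ℝ≥0∞) : min a b ≤ a ^ s * b ^ t :=
  calc min a b = min a b ^ s * min a b ^ t := by
        rw [← ENNReal.rpow_add_of_nonneg _ _ hs ht, hst, ENNReal.rpow_one]
    _ ≤ a ^ s * b ^ t := by gcongr <;> simp

theorem min_le_weighted_rpow_mean {v w : ℝ≥0∞} (hvw : v + w = 1) {q : ℝ} (hq : q ≠ 0)
    (a b : ℝ≥0∞) : min a b ≤ (v * a ^ q + w * b ^ q) ^ (1 / q) := by
  have weighted_self : v * min a b ^ q + w * min a b ^ q = min a b ^ q := by
    rw [← add_mul, hvw, one_mul]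
  have rpow_root : min a b = (min a b ^ q) ^ (1 / q) := by
    rw [one_div, ENNReal.rpow_rpow_inv hq]
  rw [rpow_root]
  rcases hq.lt_or_gt with hneg | hpos
  · have antitone_rpow := antitone_ennreal_rpow_of_nonpos hneg.le
    refine antitone_ennreal_rpow_of_nonpos (one_div_nonpos.2 hneg.le) ?_
    calc v * a ^ q + w * b ^ q ≤ v * min a b ^ q + w * min a b ^ q :=
          add_le_add (mul_le_mul_right (antitone_rpow (min_le_left a b)) v)
            (mul_le_mul_right (antitone_rpow (min_le_right a b)) w)
      _ = min a b ^ q := weighted_self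
  · refine ENNReal.rpow_le_rpow ?_ (one_div_pos.2 hpos).le
    calc min a b ^ q = v * min a b ^ q + w * min a b ^ q := weighted_self.symm
      _ ≤ v * a ^ q + w * b ^ q := by gcongr <;> simp

theorem min_le_Mp (p : EReal) {lam : ℝ} (hlam : lam ∈ Ioo (0 : ℝ) 1) {a b : ℝ≥0∞}
    (ha : a ≠ 0) (hb : b ≠ 0) : min a b ≤ Mp p lam a b := by
  have one_sub_lam_nonneg : 0 ≤ 1 - lam := sub_nonneg.2 hlam.2.le
  rw [Mp, if_neg (not_or.2 ⟨ha, hb⟩)]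
  split_ifs with htop hbot hzero
  · exact min_le_max
  · exact le_rfl
  · exact min_le_rpow_mul_rpow one_sub_lam_nonneg hlam.1.le (sub_add_cancel 1 lam) a b
  · have weights : ENNReal.ofReal (1 - lam) + ENNReal.ofReal lam = 1 := by
      rw [← ENNReal.ofReal_add one_sub_lam_nonneg hlam.1.le, sub_add_cancel, ENNReal.ofReal_one]
    have toReal_ne_zero : p.toReal ≠ 0 := by simp [EReal.toReal_eq_zero_iff, htop, hbot, hzero]
    exact min_le_weighted_rpow_mean weights toReal_ne_zero a b

theorem SatisfiesBM.min_measure_le {X : Type*} [MeasurableSpace X] {d : X → X → ℝ} {μ : Measure X}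
    {p : EReal} (h : SatisfiesBM d μ p) {lam : ℝ} (hlam : lam ∈ Ioo (0 : ℝ) 1) {A B C : Set X}
    (hAm : MeasurableSet A) (hBm : MeasurableSet B) (hCm : MeasurableSet C)
    (hC : starComb d lam A B ⊆ C) : min (μ A) (μ B) ≤ μ C := by
  by_cases hA₀ : μ A = 0
  · simp [hA₀]
  by_cases hB₀ : μ B = 0
  · simp [hB₀]
  exact (min_le_Mp p hlam hA₀ hB₀).trans <|
    h lam hlam A B C (nonempty_of_measure_ne_zero hA₀) (nonempty_of_measure_ne_zero hB₀)
      hAm hBm hCm hA₀ hB₀ hC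

section SuperlevelSets

variable {X : Type*} [MeasurableSpace X] {μ : Measure X}

theorem lintegral_eq_lintegral_measure_ofReal_lt {f : X → ℝ≥0∞} (hf : AEMeasurable f μ) :
    ∫⁻ x, f x ∂μ = ∫⁻ t in Ioi (0 : ℝ), μ {x | ENNReal.ofReal t < f x} := by
  by_cases htop : μ {x | f x = ∞} = 0
  · have hfin : ∀ᵐ x ∂μ, f x ≠ ∞ := measure_eq_zero_iff_ae_notMem.1 htop
    calc ∫⁻ x, f x ∂μ = ∫⁻ x, ENNReal.ofReal (f x).toReal ∂μ :=
          lintegral_congr_ae <| hfin.mono fun x hx => (ENNReal.ofReal_toReal hx).symm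
      _ = ∫⁻ t in Ioi (0 : ℝ), μ {x | t < (f x).toReal} :=
          lintegral_eq_lintegral_meas_lt μ (Eventually.of_forall fun x => ENNReal.toReal_nonneg)
            hf.ennreal_toReal
      _ = ∫⁻ t in Ioi (0 : ℝ), μ {x | ENNReal.ofReal t < f x} :=
          setLIntegral_congr_fun measurableSet_Ioi fun t ht =>
            measure_congr <| eventuallyEq_set.2 <| hfin.mono fun x hx =>
              (ENNReal.ofReal_lt_iff_lt_toReal (le_of_lt ht) hx).symm
  · rw [lintegral_eq_top_of_measure_eq_top_ne_zero hf htop, eq_comm, eq_top_iff]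
    calc ∞ = ∫⁻ _ in Ioi (0 : ℝ), μ {x | f x = ∞} := by
          rw [setLIntegral_const, Real.volume_Ioi, ENNReal.mul_top htop]
      _ ≤ ∫⁻ t in Ioi (0 : ℝ), μ {x | ENNReal.ofReal t < f x} := by
          refine lintegral_mono fun t => measure_mono fun x (hx : f x = ∞) => ?_
          exact ENNReal.ofReal_lt_top.trans_eq hx.symm

theorem SatisfiesBMbarLinear.measure_superlevel_le {d : X → X → ℝ}
    (hμ : SatisfiesBMbarLinear d μ) {lam : ℝ} (hlam : lam ∈ Ioo (0 : ℝ) 1) {f g h : X → ℝ≥0∞}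
    (hf : Measurable f) (hg : Measurable g) (hh : Measurable h) (hsup : ⨆ x, f x = ⨆ x, g x)
    (hmin : ∀ x y, ∀ z ∈ starComb d lam {x} {y}, min (f x) (g y) ≤ h z) (t : ℝ≥0∞) :
    ENNReal.ofReal (1 - lam) * μ {x | t < f x} + ENNReal.ofReal lam * μ {x | t < g x}
      ≤ μ {x | t < h x} := by
  by_cases ht : t < ⨆ x, f x
  · refine hμ lam hlam _ _ _ (lt_iSup_iff.1 ht) (lt_iSup_iff.1 (ht.trans_eq hsup))
      (measurableSet_lt measurable_const hf) (measurableSet_lt measurable_const hg)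
      (measurableSet_lt measurable_const hh) ?_
    rintro z ⟨x, hx, y, hy, hz⟩
    exact (lt_min hx hy).trans_le (hmin x y z ⟨x, rfl, y, rfl, hz⟩)
  · have hf_le : ∀ x, f x ≤ t := iSup_le_iff.1 (not_lt.1 ht)
    have hg_le : ∀ x, g x ≤ t := iSup_le_iff.1 (hsup.symm.trans_le (not_lt.1 ht))
    simp [(hf_le _).not_gt, (hg_le _).not_gt]

theorem SatisfiesBMbarLinear.lintegral_le {d : X → X → ℝ}
    (hμ : SatisfiesBMbarLinear d μ) {lam : ℝ} (hlam : lam ∈ Ioo (0 : ℝ) 1) {f g h : X → ℝ≥0∞}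
    (hf : Measurable f) (hg : Measurable g) (hh : Measurable h) (hsup : ⨆ x, f x = ⨆ x, g x)
    (hmin : ∀ x y, ∀ z ∈ starComb d lam {x} {y}, min (f x) (g y) ≤ h z) :
    ENNReal.ofReal (1 - lam) * (∫⁻ x, f x ∂μ) + ENNReal.ofReal lam * (∫⁻ x, g x ∂μ)
      ≤ ∫⁻ x, h x ∂μ := by
  simp only [lintegral_eq_lintegral_measure_ofReal_lt hf.aemeasurable,
    lintegral_eq_lintegral_measure_ofReal_lt hg.aemeasurable,
    lintegral_eq_lintegral_measure_ofReal_lt hh.aemeasurable]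
  calc ENNReal.ofReal (1 - lam) * (∫⁻ t in Ioi (0 : ℝ), μ {x | ENNReal.ofReal t < f x})
        + ENNReal.ofReal lam * (∫⁻ t in Ioi (0 : ℝ), μ {x | ENNReal.ofReal t < g x})
      ≤ ∫⁻ t in Ioi (0 : ℝ), (ENNReal.ofReal (1 - lam) * μ {x | ENNReal.ofReal t < f x}
        + ENNReal.ofReal lam * μ {x | ENNReal.ofReal t < g x}) :=
        (add_le_add (lintegral_const_mul_le _ _) (lintegral_const_mul_le _ _)).trans
          (le_lintegral_add _ _)
    _ ≤ ∫⁻ t in Ioi (0 : ℝ), μ {x | ENNReal.ofReal t < h x} :=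
        lintegral_mono fun t =>
          hμ.measure_superlevel_le hlam hf hg hh hsup hmin (ENNReal.ofReal t)

end SuperlevelSets

section Products

variable {X Y : Type*} [PseudoMetricSpace X] [PseudoMetricSpace Y]

theorem rho_eq_mul_rho {c : ℝ} (hc : 0 ≤ c) {z w a b : X × Y}
    (h₁ : dist z.1 w.1 = c * dist a.1 b.1) (h₂ : dist z.2 w.2 = c * dist a.2 b.2) :
    rho z w = c * rho a b := by
  simp only [rho]
  rw [h₁, h₂, mul_pow, mul_pow, ← mul_add, Real.sqrt_mul (sq_nonneg c), Real.sqrt_sq hc]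

theorem starComb_preimage_prodMk_subset {lam : ℝ} (hlam : lam ∈ Icc (0 : ℝ) 1)
    (A B : Set (X × Y)) {x y z : X} (hz : z ∈ starComb dist lam {x} {y}) :
    starComb dist lam (Prod.mk x ⁻¹' A) (Prod.mk y ⁻¹' B)
      ⊆ Prod.mk z ⁻¹' starComb rho lam A B := by
  obtain ⟨_, rfl, _, rfl, hzx, hzy⟩ := hz
  rintro w ⟨a, ha, b, hb, hwa, hwb⟩
  exact ⟨_, ha, _, hb, rho_eq_mul_rho hlam.1 hzx hwa, rho_eq_mul_rho (sub_nonneg.2 hlam.2) hzy hwb⟩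

variable [MeasurableSpace X] [MeasurableSpace Y]

theorem statement3_general (μX : Measure X) (μY : Measure Y) [SFinite μY] {p : EReal}
    (hX : SatisfiesBMbarLinear (dist : X → X → ℝ) μX)
    (hY : SatisfiesBM (dist : Y → Y → ℝ) μY p)
    {lam : ℝ} (hlam : lam ∈ Ioo (0 : ℝ) 1) {A B C : Set (X × Y)}
    (hAm : MeasurableSet A) (hBm : MeasurableSet B) (hCm : MeasurableSet C)
    (hC : starComb rho lam A B ⊆ C)
    (hsup : ⨆ x : X, μY (Prod.mk x ⁻¹' A) = ⨆ x : X, μY (Prod.mk x ⁻¹' B)) :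
    ENNReal.ofReal (1 - lam) * (μX.prod μY) A + ENNReal.ofReal lam * (μX.prod μY) B
      ≤ (μX.prod μY) C := by
  rw [Measure.prod_apply hAm, Measure.prod_apply hBm, Measure.prod_apply hCm]
  refine hX.lintegral_le hlam (measurable_measure_prodMk_left hAm)
    (measurable_measure_prodMk_left hBm) (measurable_measure_prodMk_left hCm) hsup
    fun x y z hz => ?_
  exact hY.min_measure_le hlam (measurable_prodMk_left hAm) (measurable_prodMk_left hBm)
    (measurable_prodMk_left hCm) <|
    (starComb_preimage_prodMk_subset (Ioo_subset_Icc_self hlam) A B hz).trans (preimage_mono hC)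

end Products

/-- Theorem `t:linBM_ProdMetSpa`: linear Brunn–Minkowski inequality on
`X × Y` when `X` satisfies `B̄M(1)`, `Y` satisfies `BM(p)`, and the two sets have equal
maximal sections. -/
theorem statement3 {X Y : Type*} [MetricSpace X] [MetricSpace Y]
    [MeasurableSpace X] [OpensMeasurableSpace X] [MeasurableSpace Y] [OpensMeasurableSpace Y]
    (μX : Measure X) (μY : Measure Y) [SigmaFinite μX] [SigmaFinite μY]
    (hdX : StrictlyIntrinsicDist (dist : X → X → ℝ))
    (hdY : StrictlyIntrinsicDist (dist : Y → Y → ℝ))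
    (p : EReal)
    (hX : SatisfiesBMbarLinear (dist : X → X → ℝ) μX)
    (hY : SatisfiesBM (dist : Y → Y → ℝ) μY p)
    (lam : ℝ) (hlam : lam ∈ Ioo (0:ℝ) 1)
    (A B : Set (X × Y)) (hA : A.Nonempty) (hB : B.Nonempty)
    (hAm : MeasurableSet A) (hBm : MeasurableSet B)
    (hCm : MeasurableSet (starComb (rho : X × Y → X × Y → ℝ) lam A B))
    (hsup : (⨆ x : X, μY {y : Y | (x, y) ∈ A}) = ⨆ x : X, μY {y : Y | (x, y) ∈ B}) :
    ENNReal.ofReal (1 - lam) * (μX.prod μY) A + ENNReal.ofReal lam * (μX.prod μY) B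
      ≤ (μX.prod μY) (starComb (rho : X × Y → X × Y → ℝ) lam A B) := by
  exact statement3_general μX μY hX hY hlam hAm hBm hCm subset_rfl hsup

end
end

section
/- Let (X,d_X,μ_X) and (Y,d_Y,μ_Y) be metric measure spaces with μ_X σ-finite, μ_Y locally finite and μ_{X×Y} a Radon measure, and let n,N>0. If (X,d_X,μ_X) satisfies the general inequality B̄M(1) and (Y,d_Y,μ_Y) satisfies the weighted inequality BM(1/n,N/n), then (X×Y,ρ,μ_{X×Y}) satisfies BM(1/(n+1),(N+1)/(n+1)). -/
open MeasureTheory Set Metric Filter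
open scoped ENNReal NNReal Topology Pointwise

noncomputable section

/-!
Write `A_x` for the section of `A` over `x`. If `z` divides the pair `x, y` in the ratio
`λ : 1 - λ`, then the combination of the sections `A_x` and `B_y` lies in `C_z`, so the inequality
on `Y` says that `f x = (1 - λ)^N μY(A_x)`, `g y = λ^N μY(B_y)` and `h z = μY(C_z)` satisfy
`f(x)^{1/n} + g(y)^{1/n} ≤ h(z)^{1/n}`. It remains to deduce
`((1 - λ)∫f)^{1/(n+1)} + (λ∫g)^{1/(n+1)} ≤ (∫h)^{1/(n+1)}` from `B̄M(1)` on `X`.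

By truncation, `f` and `g` may be taken to have finite suprema `F` and `G`. With
`T = (F^{1/n} + G^{1/n})^n`, the functions `T f / F` and `T g / G` have the same supremum, and their
minimum at `x, y` is at most `h(z)`. Applying `B̄M(1)` to superlevel sets and integrating over the
level gives `T ((1 - λ)∫f / F + λ∫g / G) ≤ ∫h`, and Hölder's inequality eliminates `F` and `G`.
-/

section RootMeans

theorem rpow_add_rpow_le_rpow_mul_add {n : ℝ} (hn : 0 < n) (u v s t : ℝ≥0∞) :
    (u ^ n * s) ^ (1 / (n + 1)) + (v ^ n * t) ^ (1 / (n + 1)) ≤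
      ((u + v) ^ n * (s + t)) ^ (1 / (n + 1)) := by
  have hpq : ((n + 1) / n).HolderConjugate (n + 1) := by
    rw [Real.holderConjugate_iff, one_lt_div hn]
    exact ⟨by linarith, by field_simp⟩
  have hinv : 0 ≤ 1 / (n + 1) := by positivity
  have holder := ENNReal.inner_le_Lp_mul_Lq Finset.univ
    ![u ^ (n * (1 / (n + 1))), v ^ (n * (1 / (n + 1)))]
    ![s ^ (1 / (n + 1)), t ^ (1 / (n + 1))] hpq
  have cancel_left : n * (1 / (n + 1)) * ((n + 1) / n) = 1 := by field_simp
  have cancel_right : 1 / (n + 1) * (n + 1) = 1 := by field_simp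
  have outer_exponent : 1 / ((n + 1) / n) = n * (1 / (n + 1)) := by field_simp
  simpa only [Fin.sum_univ_two, Matrix.cons_val_zero, Matrix.cons_val_one, ← ENNReal.rpow_mul,
    cancel_left, cancel_right, outer_exponent, ENNReal.rpow_one,
    ENNReal.mul_rpow_of_nonneg _ _ hinv] using holder

theorem rpow_add_rpow_le_of_mul_div_add_div_le {n : ℝ} (hn : 0 < n) {F G a b c : ℝ≥0∞}
    (hF : F ≠ 0) (hF' : F ≠ ⊤) (hG : G ≠ 0) (hG' : G ≠ ⊤)
    (h : (F ^ (1 / n) + G ^ (1 / n)) ^ n * (a / F + b / G) ≤ c) :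
    a ^ (1 / (n + 1)) + b ^ (1 / (n + 1)) ≤ c ^ (1 / (n + 1)) := by
  have rpow_mul_div_cancel {W w : ℝ≥0∞} (hW : W ≠ 0) (hW' : W ≠ ⊤) :
      (W ^ (1 / n)) ^ n * (w / W) = w := by
    rw [← ENNReal.rpow_mul, one_div_mul_cancel hn.ne', ENNReal.rpow_one,
      ENNReal.mul_div_cancel hW hW']
  calc a ^ (1 / (n + 1)) + b ^ (1 / (n + 1))
      = ((F ^ (1 / n)) ^ n * (a / F)) ^ (1 / (n + 1)) +
          ((G ^ (1 / n)) ^ n * (b / G)) ^ (1 / (n + 1)) := by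
        rw [rpow_mul_div_cancel hF hF', rpow_mul_div_cancel hG hG']
    _ ≤ ((F ^ (1 / n) + G ^ (1 / n)) ^ n * (a / F + b / G)) ^ (1 / (n + 1)) :=
        rpow_add_rpow_le_rpow_mul_add hn _ _ _ _
    _ ≤ c ^ (1 / (n + 1)) := by gcongr

theorem rpow_add_rpow_mul_le {n : ℝ} (hn : 0 < n) {F G a b c t : ℝ≥0∞}
    (ha : t * F ≤ a) (hb : t * G ≤ b) (hab : a ^ (1 / n) + b ^ (1 / n) ≤ c ^ (1 / n)) :
    (F ^ (1 / n) + G ^ (1 / n)) ^ n * t ≤ c := by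
  have hinv : 0 ≤ 1 / n := by positivity
  have root_le : (F ^ (1 / n) + G ^ (1 / n)) * t ^ (1 / n) ≤ c ^ (1 / n) := by
    calc (F ^ (1 / n) + G ^ (1 / n)) * t ^ (1 / n)
        = (t * F) ^ (1 / n) + (t * G) ^ (1 / n) := by
          rw [ENNReal.mul_rpow_of_nonneg _ _ hinv, ENNReal.mul_rpow_of_nonneg _ _ hinv]; ring
      _ ≤ a ^ (1 / n) + b ^ (1 / n) := by gcongr
      _ ≤ c ^ (1 / n) := hab
  simpa only [ENNReal.mul_rpow_of_nonneg _ _ hn.le, ← ENNReal.rpow_mul, one_div_mul_cancel hn.ne',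
    ENNReal.rpow_one] using ENNReal.rpow_le_rpow root_le hn.le

theorem ofReal_rpow_div_mul_rpow {c : ℝ} (hc : 0 < c) {n : ℝ} (hn : 0 < n) (N : ℝ) (a : ℝ≥0∞) :
    ENNReal.ofReal (c ^ (N / n)) * a ^ (1 / n) = (ENNReal.ofReal (c ^ N) * a) ^ (1 / n) := by
  rw [ENNReal.mul_rpow_of_nonneg _ _ (by positivity), ENNReal.ofReal_rpow_of_pos (by positivity),
    ← Real.rpow_mul hc.le, mul_one_div]

end RootMeans

section Lintegral

variable {α : Type*} [MeasurableSpace α] {μ : Measure α} {f : α → ℝ≥0∞}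

theorem lintegral_eq_lintegral_meas_ofReal_lt (hf : AEMeasurable f μ) :
    ∫⁻ x, f x ∂μ = ∫⁻ t in Ioi (0 : ℝ), μ {x | ENNReal.ofReal t < f x} := by
  by_cases hfin : ∀ᵐ x ∂μ, f x ≠ ⊤
  · calc ∫⁻ x, f x ∂μ = ∫⁻ x, ENNReal.ofReal (f x).toReal ∂μ :=
          lintegral_congr_ae <| hfin.mono fun x hx => (ENNReal.ofReal_toReal hx).symm
      _ = ∫⁻ t in Ioi (0 : ℝ), μ {x | t < (f x).toReal} :=
          lintegral_eq_lintegral_meas_lt μ (ae_of_all _ fun _ => ENNReal.toReal_nonneg)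
            hf.ennreal_toReal
      _ = ∫⁻ t in Ioi (0 : ℝ), μ {x | ENNReal.ofReal t < f x} := by
          refine setLIntegral_congr_fun measurableSet_Ioi fun t ht => measure_congr ?_
          filter_upwards [hfin] with x hx
          exact propext (ENNReal.ofReal_lt_iff_lt_toReal (le_of_lt ht) hx).symm
  · have htop : μ {x | f x = ⊤} ≠ 0 := by simpa [ae_iff] using hfin
    have hle : ∫⁻ _ in Ioi (0 : ℝ), μ {x | f x = ⊤} ≤
        ∫⁻ t in Ioi (0 : ℝ), μ {x | ENNReal.ofReal t < f x} :=
      lintegral_mono fun t => measure_mono fun x hx =>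
        ENNReal.ofReal_lt_top.trans_eq hx.symm
    rw [lintegral_const, Measure.restrict_apply_univ, Real.volume_Ioi,
      ENNReal.mul_top htop, top_le_iff] at hle
    rw [hle]
    by_contra hne
    exact hfin ((ae_lt_top' hf hne).mono fun _ hx => hx.ne)

theorem tendsto_lintegral_min_natCast (hf : Measurable f) :
    Tendsto (fun m : ℕ => ∫⁻ x, min (f x) m ∂μ) atTop (𝓝 (∫⁻ x, f x ∂μ)) := by
  refine lintegral_tendsto_of_tendsto_of_monotone
    (fun m => (hf.min measurable_const).aemeasurable)
    (ae_of_all _ fun x k m hkm => min_le_min_left _ (Nat.mono_cast hkm)) (ae_of_all _ fun x => ?_)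
  simpa using tendsto_const_nhds.min ENNReal.tendsto_nat_nhds_top

theorem ofReal_mul_lintegral_ofReal_rpow_mul {c : ℝ} (hc : 0 < c) (N : ℝ) (f : α → ℝ≥0∞) :
    ENNReal.ofReal c * ∫⁻ x, ENNReal.ofReal (c ^ N) * f x ∂μ =
      ENNReal.ofReal (c ^ (N + 1)) * ∫⁻ x, f x ∂μ := by
  rw [lintegral_const_mul' _ _ ENNReal.ofReal_ne_top, ← mul_assoc, ← ENNReal.ofReal_mul hc.le,
    mul_comm c, Real.rpow_add_one hc.ne']

theorem lintegral_ofReal_rpow_mul_ne_zero {c : ℝ} (hc : 0 < c) (N : ℝ)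
    (hf : ∫⁻ x, f x ∂μ ≠ 0) : ∫⁻ x, ENNReal.ofReal (c ^ N) * f x ∂μ ≠ 0 := by
  rw [lintegral_const_mul' _ _ ENNReal.ofReal_ne_top]
  exact mul_ne_zero (ENNReal.ofReal_pos.2 (Real.rpow_pos_of_pos hc N)).ne' hf

end Lintegral

section ProductMeasure

variable {α β : Type*} [MeasurableSpace α] [MeasurableSpace β] {μ : Measure α} {ν : Measure β}
  {s : Set (α × β)}

-- `Measure.prod` is a `Measure.bind`, whose value is `0` when the kernel is not a.e. measurable.
theorem aemeasurable_map_prodMk_of_prod_ne_zero (h : μ.prod ν ≠ 0) :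
    AEMeasurable (fun x => ν.map (Prod.mk x)) μ := by
  contrapose! h
  rw [Measure.prod_def, Measure.bind, Measure.map_of_not_aemeasurable h, Measure.join_zero]

theorem aemeasurable_measure_prodMk_preimage (h : μ.prod ν ≠ 0) (hs : MeasurableSet s) :
    AEMeasurable (fun x => ν (Prod.mk x ⁻¹' s)) μ := by
  simpa only [Function.comp_def, Measure.map_apply measurable_prodMk_left hs] using
    (Measure.measurable_coe hs).comp_aemeasurable (aemeasurable_map_prodMk_of_prod_ne_zero h)

theorem prod_apply_of_prod_ne_zero (h : μ.prod ν ≠ 0) (hs : MeasurableSet s) :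
    μ.prod ν s = ∫⁻ x, ν (Prod.mk x ⁻¹' s) ∂μ := by
  rw [Measure.prod_def, Measure.bind_apply hs (aemeasurable_map_prodMk_of_prod_ne_zero h)]
  simp only [Measure.map_apply measurable_prodMk_left hs]

end ProductMeasure

section Rho

variable {X Y : Type*} [PseudoMetricSpace X] [PseudoMetricSpace Y]

theorem rho_eq_mul {c : ℝ} (hc : 0 ≤ c) {p q r s : X × Y}
    (h₁ : dist p.1 q.1 = c * dist r.1 s.1) (h₂ : dist p.2 q.2 = c * dist r.2 s.2) :
    rho p q = c * rho r s := by
  simp only [rho, h₁, h₂, mul_pow, ← mul_add, Real.sqrt_mul (sq_nonneg c), Real.sqrt_sq hc]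

theorem starComb_prodMk_preimage_subset {lam : ℝ} (hlam : lam ∈ Icc (0 : ℝ) 1) {x y z : X}
    (hzx : dist z x = lam * dist x y) (hzy : dist z y = (1 - lam) * dist x y)
    (A B : Set (X × Y)) :
    starComb dist lam (Prod.mk x ⁻¹' A) (Prod.mk y ⁻¹' B) ⊆
      Prod.mk z ⁻¹' starComb rho lam A B := by
  rintro w ⟨a, ha, b, hb, hwa, hwb⟩
  exact ⟨(x, a), ha, (y, b), hb, rho_eq_mul hlam.1 hzx hwa,
    rho_eq_mul (sub_nonneg.2 hlam.2) hzy hwb⟩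

end Rho

namespace SatisfiesBMbarLinear

variable {X : Type*} [MeasurableSpace X] {d : X → X → ℝ} {μ : Measure X} {lam : ℝ}
  {f g h : X → ℝ≥0∞}

-- Equal suprema make the superlevel sets of `f` and `g` empty for the same levels, so `B̄M(1)`
-- can be integrated over all levels.
theorem lintegral_le_of_iSup_eq (hX : SatisfiesBMbarLinear d μ) (hlam : lam ∈ Ioo (0 : ℝ) 1)
    (hf : Measurable f) (hg : Measurable g) (hh : AEMeasurable h μ) (hfg : ⨆ x, f x = ⨆ x, g x)
    (hmin : ∀ x y z, d z x = lam * d x y → d z y = (1 - lam) * d x y →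
      min (f x) (g y) ≤ h z) :
    ENNReal.ofReal (1 - lam) * ∫⁻ x, f x ∂μ + ENNReal.ofReal lam * ∫⁻ x, g x ∂μ ≤
      ∫⁻ x, h x ∂μ := by
  rw [lintegral_eq_lintegral_meas_ofReal_lt hf.aemeasurable,
    lintegral_eq_lintegral_meas_ofReal_lt hg.aemeasurable,
    lintegral_eq_lintegral_meas_ofReal_lt hh,
    ← lintegral_const_mul' _ _ ENNReal.ofReal_ne_top,
    ← lintegral_const_mul' _ _ ENNReal.ofReal_ne_top]
  refine (le_lintegral_add _ _).trans (lintegral_mono fun t => ?_)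
  rcases lt_or_ge (ENNReal.ofReal t) (⨆ x, f x) with ht | ht
  · rw [← measure_toMeasurable {x | ENNReal.ofReal t < h x}]
    refine hX lam hlam _ _ _ (lt_iSup_iff.1 ht) (lt_iSup_iff.1 (ht.trans_eq hfg))
      (measurableSet_lt measurable_const hf) (measurableSet_lt measurable_const hg)
      (measurableSet_toMeasurable _ _) (Subset.trans ?_ (subset_toMeasurable _ _))
    rintro z ⟨x, hx, y, hy, hzx, hzy⟩
    exact (lt_min hx hy).trans_le (hmin x y z hzx hzy)
  · have hf_empty : {x | ENNReal.ofReal t < f x} = ∅ :=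
      eq_empty_of_forall_notMem fun x hx => ((le_iSup f x).trans ht).not_gt hx
    have hg_empty : {x | ENNReal.ofReal t < g x} = ∅ :=
      eq_empty_of_forall_notMem fun x hx => ((le_iSup g x).trans (hfg ▸ ht)).not_gt hx
    simp [hf_empty, hg_empty]

theorem rpow_lintegral_add_le_of_iSup_ne_top (hX : SatisfiesBMbarLinear d μ)
    (hlam : lam ∈ Ioo (0 : ℝ) 1) {n : ℝ} (hn : 0 < n)
    (hf : Measurable f) (hg : Measurable g) (hh : AEMeasurable h μ)
    (hf_ne : ⨆ x, f x ≠ 0) (hf_top : ⨆ x, f x ≠ ⊤) (hg_ne : ⨆ x, g x ≠ 0) (hg_top : ⨆ x, g x ≠ ⊤)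
    (hfgh : ∀ x y z, d z x = lam * d x y → d z y = (1 - lam) * d x y → f x ≠ 0 → g y ≠ 0 →
      f x ^ (1 / n) + g y ^ (1 / n) ≤ h z ^ (1 / n)) :
    (ENNReal.ofReal (1 - lam) * ∫⁻ x, f x ∂μ) ^ (1 / (n + 1)) +
      (ENNReal.ofReal lam * ∫⁻ x, g x ∂μ) ^ (1 / (n + 1)) ≤ (∫⁻ x, h x ∂μ) ^ (1 / (n + 1)) := by
  set F := ⨆ x, f x
  set G := ⨆ x, g x
  set T := (F ^ (1 / n) + G ^ (1 / n)) ^ n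
  have iSup_normalized : ⨆ x, T * (f x / F) = ⨆ x, T * (g x / G) := by
    rw [← ENNReal.mul_iSup, ← ENNReal.mul_iSup, ← ENNReal.iSup_div, ← ENNReal.iSup_div,
      ENNReal.div_self hf_ne hf_top, ENNReal.div_self hg_ne hg_top]
  have min_normalized_le : ∀ x y z, d z x = lam * d x y → d z y = (1 - lam) * d x y →
      min (T * (f x / F)) (T * (g y / G)) ≤ h z := by
    intro x y z hzx hzy
    rcases eq_or_ne (f x) 0 with hfx | hfx
    · simp [hfx]
    rcases eq_or_ne (g y) 0 with hgy | hgy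
    · simp [hgy]
    rw [← mul_min]
    exact rpow_add_rpow_mul_le hn (ENNReal.mul_le_of_le_div (min_le_left _ _))
      (ENNReal.mul_le_of_le_div (min_le_right _ _)) (hfgh x y z hzx hzy hfx hgy)
  have hlin := hX.lintegral_le_of_iSup_eq hlam ((hf.div_const F).const_mul T)
    ((hg.div_const G).const_mul T) hh iSup_normalized min_normalized_le
  refine rpow_add_rpow_le_of_mul_div_add_div_le hn hf_ne hf_top hg_ne hg_top
    (le_of_eq_of_le (show T * _ = _ from ?_) hlin)
  simp only [div_eq_mul_inv, lintegral_const_mul _ (hf.mul_const _), lintegral_mul_const _ hf,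
    lintegral_const_mul _ (hg.mul_const _), lintegral_mul_const _ hg]
  ring

theorem rpow_lintegral_add_le_of_measurable (hX : SatisfiesBMbarLinear d μ)
    (hlam : lam ∈ Ioo (0 : ℝ) 1) {n : ℝ} (hn : 0 < n)
    (hf : Measurable f) (hg : Measurable g) (hh : AEMeasurable h μ) (hf_ne : f ≠ 0) (hg_ne : g ≠ 0)
    (hfgh : ∀ x y z, d z x = lam * d x y → d z y = (1 - lam) * d x y → f x ≠ 0 → g y ≠ 0 →
      f x ^ (1 / n) + g y ^ (1 / n) ≤ h z ^ (1 / n)) :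
    (ENNReal.ofReal (1 - lam) * ∫⁻ x, f x ∂μ) ^ (1 / (n + 1)) +
      (ENNReal.ofReal lam * ∫⁻ x, g x ∂μ) ^ (1 / (n + 1)) ≤ (∫⁻ x, h x ∂μ) ^ (1 / (n + 1)) := by
  have hlim : Tendsto (fun m : ℕ =>
      (ENNReal.ofReal (1 - lam) * ∫⁻ x, min (f x) m ∂μ) ^ (1 / (n + 1)) +
        (ENNReal.ofReal lam * ∫⁻ x, min (g x) m ∂μ) ^ (1 / (n + 1))) atTop
      (𝓝 ((ENNReal.ofReal (1 - lam) * ∫⁻ x, f x ∂μ) ^ (1 / (n + 1)) +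
        (ENNReal.ofReal lam * ∫⁻ x, g x ∂μ) ^ (1 / (n + 1)))) :=
    ((ENNReal.Tendsto.const_mul (tendsto_lintegral_min_natCast hf)
        (.inr ENNReal.ofReal_ne_top)).ennrpow_const _).add
      ((ENNReal.Tendsto.const_mul (tendsto_lintegral_min_natCast hg)
        (.inr ENNReal.ofReal_ne_top)).ennrpow_const _)
  refine le_of_tendsto hlim ?_
  filter_upwards [eventually_ne_atTop 0] with m hm
  have iSup_min_ne_zero {k : X → ℝ≥0∞} (hk : k ≠ 0) : ⨆ x, min (k x) m ≠ 0 := by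
    obtain ⟨x, hx⟩ := Function.ne_iff.1 hk
    exact fun h0 => hx (by simpa [hm] using ENNReal.iSup_eq_zero.1 h0 x)
  have iSup_min_ne_top (k : X → ℝ≥0∞) : ⨆ x, min (k x) m ≠ ⊤ :=
    ((iSup_le fun _ => min_le_right _ _).trans_lt (ENNReal.natCast_lt_top m)).ne
  refine hX.rpow_lintegral_add_le_of_iSup_ne_top hlam hn (hf.min measurable_const)
    (hg.min measurable_const) hh (iSup_min_ne_zero hf_ne) (iSup_min_ne_top f)
    (iSup_min_ne_zero hg_ne) (iSup_min_ne_top g) fun x y z hzx hzy hfx hgy => ?_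
  have hroot := hfgh x y z hzx hzy (fun h0 => hfx (by simp [h0])) (fun h0 => hgy (by simp [h0]))
  refine le_trans ?_ hroot
  gcongr <;> exact min_le_left _ _

theorem rpow_lintegral_add_le (hX : SatisfiesBMbarLinear d μ) (hlam : lam ∈ Ioo (0 : ℝ) 1)
    {n : ℝ} (hn : 0 < n) (hh : AEMeasurable h μ)
    (hf_ne : ∫⁻ x, f x ∂μ ≠ 0) (hg_ne : ∫⁻ x, g x ∂μ ≠ 0)
    (hfgh : ∀ x y z, d z x = lam * d x y → d z y = (1 - lam) * d x y → f x ≠ 0 → g y ≠ 0 →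
      f x ^ (1 / n) + g y ^ (1 / n) ≤ h z ^ (1 / n)) :
    (ENNReal.ofReal (1 - lam) * ∫⁻ x, f x ∂μ) ^ (1 / (n + 1)) +
      (ENNReal.ofReal lam * ∫⁻ x, g x ∂μ) ^ (1 / (n + 1)) ≤ (∫⁻ x, h x ∂μ) ^ (1 / (n + 1)) := by
  obtain ⟨f', hf', hf'f, hf_int⟩ := exists_measurable_le_lintegral_eq μ f
  obtain ⟨g', hg', hg'g, hg_int⟩ := exists_measurable_le_lintegral_eq μ g
  rw [hf_int] at hf_ne ⊢
  rw [hg_int] at hg_ne ⊢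
  refine hX.rpow_lintegral_add_le_of_measurable hlam hn hf' hg' hh
    (fun h0 => hf_ne (by simp [h0])) (fun h0 => hg_ne (by simp [h0]))
    fun x y z hzx hzy hf'x hg'y => ?_
  calc f' x ^ (1 / n) + g' y ^ (1 / n) ≤ f x ^ (1 / n) + g y ^ (1 / n) := by
        gcongr
        · exact hf'f x
        · exact hg'g y
    _ ≤ h z ^ (1 / n) := hfgh x y z hzx hzy (ne_bot_of_le_ne_bot hf'x (hf'f x))
        (ne_bot_of_le_ne_bot hg'y (hg'g y))

end SatisfiesBMbarLinear

theorem SatisfiesBMW.rpow_measure_prodMk_add_le {X Y : Type*} [PseudoMetricSpace X]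
    [PseudoMetricSpace Y] [MeasurableSpace X] [MeasurableSpace Y] {ν : Measure Y} {n N lam : ℝ}
    (hn : 0 < n) (hY : SatisfiesBMW (dist : Y → Y → ℝ) ν (1 / n) (N / n))
    (hlam : lam ∈ Ioo (0 : ℝ) 1) {A B C : Set (X × Y)} (hA : MeasurableSet A)
    (hB : MeasurableSet B) (hC : MeasurableSet C) (hsub : starComb rho lam A B ⊆ C) {x y z : X}
    (hzx : dist z x = lam * dist x y) (hzy : dist z y = (1 - lam) * dist x y)
    (hAx : ν (Prod.mk x ⁻¹' A) ≠ 0) (hBy : ν (Prod.mk y ⁻¹' B) ≠ 0) :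
    (ENNReal.ofReal ((1 - lam) ^ N) * ν (Prod.mk x ⁻¹' A)) ^ (1 / n) +
      (ENNReal.ofReal (lam ^ N) * ν (Prod.mk y ⁻¹' B)) ^ (1 / n) ≤
        ν (Prod.mk z ⁻¹' C) ^ (1 / n) := by
  rw [← ofReal_rpow_div_mul_rpow (sub_pos.2 hlam.2) hn, ← ofReal_rpow_div_mul_rpow hlam.1 hn]
  exact hY lam hlam _ _ _ (nonempty_of_measure_ne_zero hAx) (nonempty_of_measure_ne_zero hBy)
    (measurable_prodMk_left hA) (measurable_prodMk_left hB) (measurable_prodMk_left hC) hAx hBy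
    ((starComb_prodMk_preimage_subset (Ioo_subset_Icc_self hlam) hzx hzy A B).trans
      (preimage_mono hsub))

theorem statement4_general {X Y : Type*} [PseudoMetricSpace X] [PseudoMetricSpace Y]
    [MeasurableSpace X] [MeasurableSpace Y] {μX : Measure X} {μY : Measure Y} {n N : ℝ}
    (hn : 0 < n) (hX : SatisfiesBMbarLinear (dist : X → X → ℝ) μX)
    (hY : SatisfiesBMW (dist : Y → Y → ℝ) μY (1 / n) (N / n)) :
    SatisfiesBMW (rho : X × Y → X × Y → ℝ) (μX.prod μY) (1 / (n + 1)) ((N + 1) / (n + 1)) := by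
  intro lam hlam A B C _ _ hA hB hC hA0 hB0 hsub
  have hprod : μX.prod μY ≠ 0 := fun h0 => hA0 (by simp [h0])
  have hlam' : 0 < 1 - lam := sub_pos.2 hlam.2
  have hn1 : 0 < n + 1 := by positivity
  rw [prod_apply_of_prod_ne_zero hprod hA] at hA0 ⊢
  rw [prod_apply_of_prod_ne_zero hprod hB] at hB0 ⊢
  rw [prod_apply_of_prod_ne_zero hprod hC, ofReal_rpow_div_mul_rpow hlam' hn1,
    ofReal_rpow_div_mul_rpow hlam.1 hn1, ← ofReal_mul_lintegral_ofReal_rpow_mul hlam',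
    ← ofReal_mul_lintegral_ofReal_rpow_mul hlam.1]
  exact hX.rpow_lintegral_add_le hlam hn (aemeasurable_measure_prodMk_preimage hprod hC)
    (lintegral_ofReal_rpow_mul_ne_zero hlam' N hA0)
    (lintegral_ofReal_rpow_mul_ne_zero hlam.1 N hB0) fun x y z hzx hzy hAx hBy =>
      hY.rpow_measure_prodMk_add_le hn hlam hA hB hC hsub hzx hzy
        (right_ne_zero_of_mul hAx) (right_ne_zero_of_mul hBy)

/-- Theorem `t:BM_ProdMetSpa_gen`: if `X` satisfies `B̄M(1)` and `Y`
satisfies the weighted inequality `BM(1/n, N/n)`, then `X × Y` satisfies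
`BM(1/(n+1), (N+1)/(n+1))`. -/
theorem statement4 {X Y : Type*} [MetricSpace X] [MetricSpace Y]
    [MeasurableSpace X] [OpensMeasurableSpace X] [MeasurableSpace Y] [OpensMeasurableSpace Y]
    (μX : Measure X) (μY : Measure Y) [SigmaFinite μX] [IsLocallyFiniteMeasure μY]
    [IsLocallyFiniteMeasure (μX.prod μY)]
    (hdX : StrictlyIntrinsicDist (dist : X → X → ℝ))
    (hdY : StrictlyIntrinsicDist (dist : Y → Y → ℝ))
    (hRadon : (μX.prod μY).InnerRegular)
    (n N : ℝ) (hn : 0 < n) (hN : 0 < N)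
    (hX : SatisfiesBMbarLinear (dist : X → X → ℝ) μX)
    (hY : SatisfiesBMW (dist : Y → Y → ℝ) μY (1/n) (N/n)) :
    SatisfiesBMW (rho : X × Y → X × Y → ℝ) (μX.prod μY) (1/(n+1)) ((N+1)/(n+1)) := by
  exact statement4_general hn hX hY

end
end
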